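/- Let δ ∈ (0,1) and σ ≥ 2 + δ. Then there exists a constant C > 0 such that for every real M ≥ 1 and every t > 0: ∫₀ᵗ e^{−(s^{−δ} − t^{−δ}) M} M ⟨s⟩^{−σ+1} ds ≤ C, where ⟨s⟩ = √(1+s²). The bound C is uniform in M and t. -/

import Mathlib

open MeasureTheory

/-- For `δ ∈ (0,1)` and `σ ≥ 2 + δ` there is `C > 0` such that for every
real `M ≥ 1` and every `t > 0`,
`∫₀ᵗ e^{−(s^{−δ} − t^{−δ}) M} M ⟨s⟩^{−σ+1} ds ≤ C`, where `⟨s⟩ = √(1+s²)`;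
the bound is uniform in `M` and `t`. -/
theorem exponential_weight_integral_uniform_bound
    (δ σ : ℝ) (hδ0 : 0 < δ) (hδ1 : δ < 1) (hσ : 2 + δ ≤ σ) :
    ∃ C : ℝ, 0 < C ∧ ∀ M t : ℝ, 1 ≤ M → 0 < t →
      (∫ s in (0:ℝ)..t,
          Real.exp (-(s ^ (-δ) - t ^ (-δ)) * M) * M * (Real.sqrt (1 + s ^ 2)) ^ (-σ + 1)) ≤ C := by
  refine ⟨1 / δ, by positivity, fun M t hM ht => ?_⟩
  have hM0 : 0 < M := by linarith
  by_cases hint : IntervalIntegrable (fun s : ℝ => Real.exp (-(s ^ (-δ) - t ^ (-δ)) * M) * M *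
      (Real.sqrt (1 + s ^ 2)) ^ (-σ + 1)) volume 0 t
  swap
  · rw [intervalIntegral.integral_undef hint]; positivity
  set F : ℝ → ℝ := fun s => Real.exp (-(s ^ (-δ) - t ^ (-δ)) * M) / δ with hF
  have hder : ∀ x : ℝ, 0 < x → HasDerivAt F
      (Real.exp (-(x ^ (-δ) - t ^ (-δ)) * M) * M * x ^ (-δ - 1)) x := by
    intro x hx
    have h1 := Real.hasDerivAt_rpow_const (p := -δ) (Or.inl hx.ne')
    have h2 := ((((h1.sub_const (t ^ (-δ))).neg).mul_const M).exp).div_const δ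
    have h3 : HasDerivAt F (Real.exp (-(x ^ (-δ) - t ^ (-δ)) * M) *
        (-(-δ * x ^ (-δ - 1)) * M) / δ) x := h2
    have h4 : Real.exp (-(x ^ (-δ) - t ^ (-δ)) * M) * M * x ^ (-δ - 1) =
        Real.exp (-(x ^ (-δ) - t ^ (-δ)) * M) * (-(-δ * x ^ (-δ - 1)) * M) / δ := by
      rw [eq_div_iff hδ0.ne']
      ring
    rw [h4]
    exact h3
  have hlim : Filter.Tendsto F (nhdsWithin 0 (Set.Ioi 0)) (nhds 0) := by
    have h1 : Filter.Tendsto (fun s : ℝ => s ^ (-δ)) (nhdsWithin 0 (Set.Ioi 0)) Filter.atTop :=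
      tendsto_rpow_neg_nhdsGT_zero (by linarith)
    have h2 := Filter.tendsto_atTop_add_const_right _ (-(t ^ (-δ))) h1
    have h3 := Filter.tendsto_neg_atTop_atBot.comp (h2.atTop_mul_const hM0)
    have h4 := (Real.tendsto_exp_atBot.comp h3).div_const δ
    rw [zero_div] at h4
    refine h4.congr fun s => ?_
    simp only [hF, Function.comp]
    congr 2
    ring
  have hcont : ContinuousOn (Function.update F 0 0) (Set.Icc 0 t) := by
    intro x hx
    rcases hx.1.eq_or_lt with h | h
    · subst h
      rw [continuousWithinAt_update_same]
      refine hlim.mono_left (nhdsWithin_mono _ ?_)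
      rintro y ⟨hy, hy0⟩
      exact lt_of_le_of_ne hy.1 (Ne.symm hy0)
    · exact ((continuousAt_update_of_ne h.ne').2 (hder x h).continuousAt).continuousWithinAt
  have key := intervalIntegral.integral_le_sub_of_hasDeriv_right_of_le (a := 0) (b := t)
    (g := Function.update F 0 0)
    (g' := fun x => Real.exp (-(x ^ (-δ) - t ^ (-δ)) * M) * M * x ^ (-δ - 1))
    (φ := fun s : ℝ => Real.exp (-(s ^ (-δ) - t ^ (-δ)) * M) * M *
      (Real.sqrt (1 + s ^ 2)) ^ (-σ + 1)) ht.le hcont ?_ ?_ ?_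
  · refine key.trans ?_
    rw [Function.update_self, Function.update_of_ne ht.ne']
    simp [hF]
  · intro x hx
    refine HasDerivAt.hasDerivWithinAt ?_
    refine (hder x hx.1).congr_of_eventuallyEq ?_
    filter_upwards [isOpen_ne.mem_nhds hx.1.ne'] with y hy
    exact Function.update_of_ne hy _ _
  · exact (intervalIntegrable_iff_integrableOn_Icc_of_le ht.le).1 hint
  · intro x hx
    have hx0 : 0 < x := hx.1
    have h1 : 1 ≤ Real.sqrt (1 + x ^ 2) := Real.one_le_sqrt.2 (by nlinarith)
    have h2 : x ≤ Real.sqrt (1 + x ^ 2) := Real.le_sqrt_of_sq_le (by linarith)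
    refine mul_le_mul_of_nonneg_left ?_ (by positivity)
    calc _ ≤ (Real.sqrt (1 + x ^ 2)) ^ (-δ - 1) :=
          Real.rpow_le_rpow_of_exponent_le h1 (by linarith)
      _ ≤ _ := Real.rpow_le_rpow_of_nonpos hx0 h2 (by linarith)
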